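/- Let □ = [c_x, c_x+1] × [c_y, c_y+1] be a closed unit cell with bottom-left corner c = (c_x, c_y), let S ⊆ □ be a finite set of points, let S' ⊆ ℝ² be a finite set of points, and let 𝒬 be a finite set of unit squares each containing c with S ⊆ ⋃𝒬. Let 𝒬_max ⊆ 𝒬 be the set of maximal squares of 𝒬 (squares not dominated by any other square of 𝒬), and let 𝒬* ⊆ 𝒬_max be a set cover of S of minimum size, i.e., |𝒬*| ≤ |ℛ| for every set cover ℛ ⊆ 𝒬 of S. Then for every fractional set cover x of S by 𝒬, memb(S', 𝒬*) ≤ memb(S', x) + 2. -/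

import Mathlib

open scoped Classical

/-- The number of sets in the finite family `F` containing the point `p`. -/
noncomputable def memb (p : ℝ × ℝ) (F : Finset (Set (ℝ × ℝ))) : ℕ :=
  (F.filter (fun R => p ∈ R)).card

/-- The membership of a finite point set `S'` with respect to a finite family `F`. -/
noncomputable def membS (S' : Finset (ℝ × ℝ)) (F : Finset (Set (ℝ × ℝ))) : ℕ :=
  S'.sup (fun p => memb p F)

/-- `F` is a set cover of `S`. -/
def IsCover (S : Finset (ℝ × ℝ)) (F : Finset (Set (ℝ × ℝ))) : Prop :=
  ∀ p ∈ S, ∃ R ∈ F, p ∈ R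

/-- The minimum membership of `S'` over all set covers of `S` chosen from `F`. -/
noncomputable def optMemb (S S' : Finset (ℝ × ℝ)) (F : Finset (Set (ℝ × ℝ))) : ℕ :=
  sInf {m : ℕ | ∃ G ⊆ F, IsCover S G ∧ membS S' G = m}

/-- The closed axis-parallel unit square with bottom-left corner `(a, b)`. -/
def unitSquare (a b : ℝ) : Set (ℝ × ℝ) :=
  {p | a ≤ p.1 ∧ p.1 ≤ a + 1 ∧ b ≤ p.2 ∧ p.2 ≤ b + 1}

/-- The half-open unit grid cell `[i, i+1) × [j, j+1)`. -/
def gridCell (i j : ℤ) : Set (ℝ × ℝ) :=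
  {p | (i : ℝ) ≤ p.1 ∧ p.1 < (i : ℝ) + 1 ∧ (j : ℝ) ≤ p.2 ∧ p.2 < (j : ℝ) + 1}

/-- `x` is a fractional set cover of `A` by the finite family `F`. -/
def IsFracCover (A : Finset (ℝ × ℝ)) (F : Finset (Set (ℝ × ℝ))) (x : Set (ℝ × ℝ) → ℝ) : Prop :=
  (∀ R ∈ F, 0 ≤ x R ∧ x R ≤ 1) ∧
  ∀ a ∈ A, 1 ≤ ∑ R ∈ F.filter (fun R => a ∈ R), x R

/-- The fractional membership of a point `p` with respect to `x`. -/
noncomputable def membFracP (p : ℝ × ℝ) (F : Finset (Set (ℝ × ℝ))) (x : Set (ℝ × ℝ) → ℝ) : ℝ :=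
  ∑ R ∈ F.filter (fun R => p ∈ R), x R

/-- The fractional membership of a finite point set `A'` with respect to `x`. -/
noncomputable def membFrac (A' : Finset (ℝ × ℝ)) (F : Finset (Set (ℝ × ℝ)))
    (x : Set (ℝ × ℝ) → ℝ) : ℝ :=
  ⨆ p ∈ A', membFracP p F x

theorem greedy_aux (cx cy : ℝ) (Q : Finset (Set (ℝ × ℝ))) (A B : Set (ℝ × ℝ) → ℝ)
    (hm : ∀ R ∈ Q, ∀ p : ℝ × ℝ, p ∈ R ↔ A R ≤ p.1 ∧ p.1 ≤ A R + 1 ∧ B R ≤ p.2 ∧ p.2 ≤ B R + 1)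
    (hA : ∀ R ∈ Q, A R ≤ cx) (hB : ∀ R ∈ Q, B R ≤ cy) :
    ∀ n : ℕ, ∀ S : Finset (ℝ × ℝ), S.card ≤ n → (∀ p ∈ S, cx ≤ p.1 ∧ cy ≤ p.2) → IsCover S Q →
      ∃ G ⊆ Q, IsCover S G ∧ ∃ P ⊆ S, G.card ≤ P.card ∧
        ∀ R ∈ Q, ∀ s ∈ P, ∀ t ∈ P, s ∈ R → t ∈ R → s = t := by
  intro n
  induction n with
  | zero =>
    intro S hn hS hc
    have : S = ∅ := by simpa using hn
    subst this
    exact ⟨∅, by simp, by simp [IsCover], ∅, by simp, by simp, by simp⟩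
  | succ n ih =>
    intro S hn hS hc
    rcases S.eq_empty_or_nonempty with rfl | hne
    · exact ⟨∅, by simp, by simp [IsCover], ∅, by simp, by simp, by simp⟩
    obtain ⟨s, hs, hsmax⟩ := S.exists_max_image (fun p => p.2) hne
    have hne2 : (Q.filter (fun R => s ∈ R)).Nonempty := by
      obtain ⟨R, hR, hsR⟩ := hc s hs
      exact ⟨R, by simp [hR, hsR]⟩
    obtain ⟨R, hR, hRmax⟩ := Finset.exists_max_image _ A hne2
    simp only [Finset.mem_filter] at hR hRmax
    obtain ⟨hRQ, hsR⟩ := hR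
    have hlt : (S.filter (fun p => p ∉ R)).card < S.card := by
      apply Finset.card_lt_card
      rw [Finset.filter_ssubset]
      exact ⟨s, hs, by simpa using hsR⟩
    obtain ⟨G, hGQ, hG, P, hP, hcard, hind⟩ := ih (S.filter (fun p => p ∉ R)) (by omega)
      (fun p hp => hS p (Finset.mem_filter.1 hp).1) (fun p hp => hc p (Finset.mem_filter.1 hp).1)
    have hsP : s ∉ P := fun h => (Finset.mem_filter.1 (hP h)).2 hsR
    have key : ∀ R' ∈ Q, s ∈ R' → ∀ t ∈ P, t ∉ R' := by
      intro R' hR' hsR' t ht htR'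
      obtain ⟨htS, htR⟩ := Finset.mem_filter.1 (hP ht)
      apply htR
      have h1 := hRmax R' ⟨hR', hsR'⟩
      have h2 := hsmax t htS
      have h3 := hS t htS
      rw [hm R' hR'] at htR'
      rw [hm R hRQ] at hsR ⊢
      have := hA R hRQ
      have := hB R hRQ
      refine ⟨?_, ?_, ?_, ?_⟩ <;> linarith [h3.1, h3.2, htR'.2.1, hsR.2.2.2]
    refine ⟨insert R G, Finset.insert_subset hRQ hGQ, ?_, insert s P, ?_, ?_, ?_⟩
    · intro p hp
      by_cases h : p ∈ R
      · exact ⟨R, by simp, h⟩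
      · obtain ⟨R', h1, h2⟩ := hG p (by simp [hp, h])
        exact ⟨R', by simp [h1], h2⟩
    · exact Finset.insert_subset hs (hP.trans (Finset.filter_subset _ _))
    · rw [Finset.card_insert_of_notMem hsP]
      exact (Finset.card_insert_le _ _).trans (by omega)
    · intro R' hR' u hu v hv huR hvR
      rcases Finset.mem_insert.1 hu with rfl | hu' <;> rcases Finset.mem_insert.1 hv with rfl | hv'
      · rfl
      · exact absurd hvR (key R' hR' huR v hv')
      · exact absurd huR (key R' hR' hvR u hu')
      · exact hind R' hR' u hu' v hv' huR hvR

theorem le_membFrac_aux (S' : Finset (ℝ × ℝ)) (Q : Finset (Set (ℝ × ℝ)))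
    (x : Set (ℝ × ℝ) → ℝ) (h0 : ∀ R ∈ Q, 0 ≤ x R) (p : ℝ × ℝ) (hp : p ∈ S') :
    membFracP p Q x ≤ membFrac S' Q x := by
  have hle : ∀ q, membFracP q Q x ≤ ∑ R ∈ Q, x R := fun q =>
    Finset.sum_le_sum_of_subset_of_nonneg (Finset.filter_subset _ _) (fun R hR _ => h0 R hR)
  have hs : 0 ≤ ∑ R ∈ Q, x R := Finset.sum_nonneg h0
  unfold membFrac
  have hb : BddAbove (Set.range fun q => ⨆ (_ : q ∈ S'), membFracP q Q x) := by
    refine ⟨∑ R ∈ Q, x R, ?_⟩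
    rintro _ ⟨q, rfl⟩
    exact Real.iSup_le (fun _ => hle q) hs
  refine le_trans ?_ (le_ciSup hb p)
  simp [hp]

theorem membFrac_nonneg_aux (S' : Finset (ℝ × ℝ)) (Q : Finset (Set (ℝ × ℝ)))
    (x : Set (ℝ × ℝ) → ℝ) (h0 : ∀ R ∈ Q, 0 ≤ x R) :
    0 ≤ membFrac S' Q x :=
  Real.iSup_nonneg fun _ => Real.iSup_nonneg fun _ =>
    Finset.sum_nonneg fun R hR => h0 R (Finset.mem_filter.1 hR).1

theorem stmt5 (cx cy : ℝ) (S S' : Finset (ℝ × ℝ))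
    (hS : ∀ p ∈ S, p ∈ unitSquare cx cy)
    (Q : Finset (Set (ℝ × ℝ)))
    (hsq : ∀ R ∈ Q, (∃ a b : ℝ, R = unitSquare a b) ∧ (cx, cy) ∈ R)
    (hcov : IsCover S Q)
    (Qstar : Finset (Set (ℝ × ℝ))) (hsub : Qstar ⊆ Q)
    -- every square of `Qstar` is maximal in `Q` (not dominated w.r.t. the cell):
    (hmax : ∀ R ∈ Qstar, ∀ R' ∈ Q, R' ≠ R → ¬ (R ∩ unitSquare cx cy ⊆ R' ∩ unitSquare cx cy))
    (hcov' : IsCover S Qstar)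
    (hmin : ∀ G ⊆ Q, IsCover S G → Qstar.card ≤ G.card)
    (x : Set (ℝ × ℝ) → ℝ) (hx : IsFracCover S Q x) :
    (membS S' Qstar : ℝ) ≤ membFrac S' Q x + 2 := by
  have h0 : ∀ R ∈ Q, 0 ≤ x R := fun R hR => (hx.1 R hR).1
  have hex : ∀ R : Set (ℝ × ℝ), ∃ a b : ℝ, R ∈ Q → R = unitSquare a b := by
    intro R
    by_cases hR : R ∈ Q
    · obtain ⟨a, b, h⟩ := (hsq R hR).1
      exact ⟨a, b, fun _ => h⟩
    · exact ⟨0, 0, fun h => absurd h hR⟩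
  choose A B hAB using hex
  have hm : ∀ R ∈ Q, ∀ p : ℝ × ℝ,
      p ∈ R ↔ A R ≤ p.1 ∧ p.1 ≤ A R + 1 ∧ B R ≤ p.2 ∧ p.2 ≤ B R + 1 := by
    intro R hR p
    conv_lhs => rw [hAB R hR]
    rfl
  have hc : ∀ R ∈ Q, A R ≤ cx ∧ cx ≤ A R + 1 ∧ B R ≤ cy ∧ cy ≤ B R + 1 := fun R hR =>
    (hm R hR (cx, cy)).1 (hsq R hR).2
  have hdom : ∀ R ∈ Qstar, ∀ R' ∈ Q, R' ≠ R → A R ≤ A R' → B R' < B R := by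
    intro R hR R' hR' hne hle
    by_contra hcon
    push Not at hcon
    apply hmax R hR R' hR' hne
    rintro p ⟨hpR, hpc⟩
    refine ⟨?_, hpc⟩
    rw [hm R (hsub hR)] at hpR
    rw [hm R' hR']
    obtain ⟨h1, h2, h3, h4⟩ := hpc
    have := hc R' hR'
    refine ⟨?_, ?_, ?_, ?_⟩ <;> linarith [this.1, this.2.2.1, hpR.2.1, hpR.2.2.2]
  have hScell : ∀ p ∈ S, cx ≤ p.1 ∧ cy ≤ p.2 := fun p hp => ⟨(hS p hp).1, (hS p hp).2.2.1⟩
  obtain ⟨G, hGQ, hG, P, hPS, hcard, hind⟩ := greedy_aux cx cy Q A B hm (fun R h => (hc R h).1)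
    (fun R h => (hc R h).2.2.1) S.card S le_rfl hScell hcov
  have hQP : Qstar.card ≤ P.card := (hmin G hGQ hG).trans hcard
  have hf : ∀ s : ℝ × ℝ, ∃ R, s ∈ P → R ∈ Qstar ∧ s ∈ R := by
    intro s
    by_cases hs : s ∈ P
    · obtain ⟨R, h⟩ := hcov' s (hPS hs)
      exact ⟨R, fun _ => h⟩
    · exact ⟨∅, fun h => absurd h hs⟩
  choose f hf using hf
  have hsurj : ∀ R ∈ Qstar, ∃ s ∈ P, f s = R := by
    have := Finset.surj_on_of_inj_on_of_card_le (s := P) (t := Qstar) (fun s _ => f s)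
      (fun s hs => (hf s hs).1)
      (fun s t hs ht hst => hind (f s) (hsub (hf s hs).1) s hs t ht (hf s hs).2
        (by rw [hst]; exact (hf t ht).2)) hQP
    intro R hR
    obtain ⟨s, hs, h⟩ := this R hR
    exact ⟨s, hs, h.symm⟩
  have hq : ∀ R : Set (ℝ × ℝ), ∃ s, R ∈ Qstar → s ∈ P ∧ f s = R := by
    intro R
    by_cases hR : R ∈ Qstar
    · obtain ⟨s, h⟩ := hsurj R hR
      exact ⟨s, fun _ => h⟩
    · exact ⟨0, fun h => absurd h hR⟩
  choose q hq using hq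
  have hqm : ∀ R ∈ Qstar, q R ∈ R := by
    intro R hR
    have := (hf (q R) (hq R hR).1).2
    rwa [(hq R hR).2] at this
  have hqind : ∀ R ∈ Qstar, ∀ T ∈ Qstar, ∀ U ∈ Q, q R ∈ U → q T ∈ U → R = T := by
    intro R hR T hT U hU h1 h2
    rw [← (hq R hR).2, ← (hq T hT).2,
      hind U hU _ (hq R hR).1 _ (hq T hT).1 h1 h2]
  -- reduce to a single point
  have main : ∀ p ∈ S', (memb p Qstar : ℝ) ≤ membFrac S' Q x + 2 := by
    intro p hp
    suffices h : (memb p Qstar : ℝ) ≤ membFracP p Q x + 2 by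
      linarith [le_membFrac_aux S' Q x h0 p hp]
    unfold memb membFracP
    set F := Qstar.filter (fun R => p ∈ R) with hF
    rcases F.eq_empty_or_nonempty with he | hne
    · rw [he]
      have : 0 ≤ ∑ R ∈ Q.filter (fun R => p ∈ R), x R :=
        Finset.sum_nonneg fun R hR => h0 R (Finset.mem_filter.1 hR).1
      simp only [Finset.card_empty, Nat.cast_zero]
      linarith
    obtain ⟨i, hi, himin⟩ := F.exists_min_image A hne
    obtain ⟨j, hj, hjmax⟩ := F.exists_max_image A hne
    obtain ⟨hiQ, hpi⟩ := Finset.mem_filter.1 hi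
    obtain ⟨hjQ, hpj⟩ := Finset.mem_filter.1 hj
    set M := F \ {i, j} with hM
    have hMc : F.card ≤ M.card + 2 := by
      have h1 : F.card - ({i, j} : Finset (Set (ℝ × ℝ))).card ≤ M.card := by
        rw [hM]; convert Finset.le_card_sdiff {i, j} F
      have h2 : ({i, j} : Finset (Set (ℝ × ℝ))).card ≤ 2 := Finset.card_le_two
      omega
    have hMQ : ∀ t ∈ M, t ∈ Qstar := fun t ht =>
      (Finset.mem_filter.1 (Finset.mem_sdiff.1 ht).1).1
    have hcont : ∀ t ∈ M, ∀ R ∈ Q, q t ∈ R → p ∈ R := by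
      intro t ht R hR hqR
      have htQ := hMQ t ht
      obtain ⟨htF, htn⟩ := Finset.mem_sdiff.1 ht
      simp only [Finset.mem_insert, Finset.mem_singleton, not_or] at htn
      have hb1 := hdom i hiQ t (hsub htQ) htn.1 (himin t htF)
      have hb2 := hdom t htQ j (hsub hjQ) (Ne.symm htn.2) (hjmax t htF)
      have ht1 := himin t htF
      have ht2 := hjmax t htF
      have hni : q t ∉ i := fun h => htn.1 (hqind t htQ i hiQ i (hsub hiQ) h (hqm i hiQ))
      have hnj : q t ∉ j := fun h => htn.2 (hqind t htQ j hjQ j (hsub hjQ) h (hqm j hjQ))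
      have hqt := hqm t htQ
      have hqc := hScell (q t) (hPS (hq t htQ).1)
      rw [hm t (hsub htQ)] at hqt
      rw [hm i (hsub hiQ)] at hni hpi
      rw [hm j (hsub hjQ)] at hnj hpj
      have ci := hc i (hsub hiQ)
      have cj := hc j (hsub hjQ)
      have e1 : A i + 1 < (q t).1 := by
        by_contra hcon
        push Not at hcon
        exact hni ⟨by linarith, hcon, by linarith, by linarith⟩
      have e2 : B j + 1 < (q t).2 := by
        by_contra hcon
        push Not at hcon
        exact hnj ⟨by linarith, by linarith, by linarith, hcon⟩
      have hqR' := (hm R hR _).1 hqR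
      rw [hm R hR]
      have e3 : A R ≤ A j := by
        by_contra hcon
        push Not at hcon
        have hne' : R ≠ j := by rintro rfl; exact lt_irrefl _ hcon
        have := hdom j hjQ R hR hne' hcon.le
        linarith
      have e4 : B R ≤ B i := by
        by_contra hcon
        push Not at hcon
        have hne' : R ≠ i := by rintro rfl; exact lt_irrefl _ hcon
        have := hdom i hiQ R hR hne' (by linarith)
        linarith
      refine ⟨?_, ?_, ?_, ?_⟩ <;> linarith
    have hsum : (M.card : ℝ) ≤ ∑ R ∈ Q.filter (fun R => p ∈ R), x R := by
      calc (M.card : ℝ) = ∑ t ∈ M, (1 : ℝ) := by simp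
        _ ≤ ∑ t ∈ M, ∑ R ∈ Q.filter (fun R => q t ∈ R), x R :=
            Finset.sum_le_sum fun t ht => hx.2 _ (hPS (hq t (hMQ t ht)).1)
        _ = ∑ R ∈ M.biUnion (fun t => Q.filter (fun R => q t ∈ R)), x R := by
            rw [Finset.sum_biUnion]
            intro t ht u hu htu
            simp only [Function.onFun]
            rw [Finset.disjoint_left]
            intro R h1 h2
            obtain ⟨h1, h1'⟩ := Finset.mem_filter.1 h1
            obtain ⟨_, h2'⟩ := Finset.mem_filter.1 h2
            exact htu (hqind t (hMQ t ht) u (hMQ u hu) R h1 h1' h2')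
        _ ≤ _ := by
            apply Finset.sum_le_sum_of_subset_of_nonneg
            · intro R hR
              obtain ⟨t, ht, hR⟩ := Finset.mem_biUnion.1 hR
              obtain ⟨h1, h1'⟩ := Finset.mem_filter.1 hR
              exact Finset.mem_filter.2 ⟨h1, hcont t ht R h1 h1'⟩
            · intro R hR _
              exact h0 R (Finset.mem_filter.1 hR).1
    have : (F.card : ℝ) ≤ M.card + 2 := by exact_mod_cast hMc
    linarith
  rcases S'.eq_empty_or_nonempty with rfl | hne
  · have := membFrac_nonneg_aux ∅ Q x h0
    simp only [membS, Finset.sup_empty, Nat.bot_eq_zero, Nat.cast_zero]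
    linarith
  · obtain ⟨p, hp, h⟩ := Finset.exists_mem_eq_sup S' hne (fun p => memb p Qstar)
    unfold membS
    rw [h]
    exact main p hp
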